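/- arXiv:2403.11396 — 3 statements merged into one kernel-verified Lean document; each statement's English description precedes it below -/
import Mathlib

section
/- Let m ∈ ℝ, σ > 0, and ε ∈ (0,1), and let y be a real random variable with law N(m, σ²). Then V@R_ε(y) := inf{ z ∈ ℝ | P{y < z} > ε } equals m + √2 · σ · ι_ε, where ι_ε is the unique real number with erf(ι_ε) = 2ε − 1. -/
/-! The centred normal law of variance `1/2` has density `e^{-x²}/√π`, so its distribution function
is `w ↦ (1 + erf w) / 2` (`gaussianReal_half_Iio`). Since `N(m, σ²)` is its image under the
increasing affine map `x ↦ √2 σ x + m`, the condition `P{y < z} > ε` reads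
`erf ι < erf ((z - m) / (√2 σ))`. As `erf` is strictly increasing (`erf_strictMono`), the set whose
infimum defines the value-at-risk is the open half-line `(m + √2 σ ι, ∞)`. -/

open MeasureTheory ProbabilityTheory

/-- The error function `erf(x) = (2/√π) ∫₀ˣ e^{−t²} dt`. -/
noncomputable def erf (x : ℝ) : ℝ :=
  (2 / Real.sqrt Real.pi) * ∫ t in (0 : ℝ)..x, Real.exp (-t ^ 2)

/-- Value-at-risk of a law `ν` on `ℝ` at confidence level `ε`:
`V@R_ε = inf { z | P{y < z} > ε }`. -/
noncomputable def VaR (ν : Measure ℝ) (ε : ℝ) : ℝ :=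
  sInf {z : ℝ | ENNReal.ofReal ε < ν (Set.Iio z)}

lemma integrable_exp_neg_sq : Integrable (fun t : ℝ => Real.exp (-t ^ 2)) := by
  simpa using integrable_exp_neg_mul_sq (b := 1) one_pos

lemma erf_strictMono : StrictMono erf := by
  intro a b hab
  have hint : ∀ x y : ℝ, IntervalIntegrable (fun t : ℝ => Real.exp (-t ^ 2)) volume x y :=
    fun x y => integrable_exp_neg_sq.intervalIntegrable
  have hpos : 0 < ∫ t in a..b, Real.exp (-t ^ 2) :=
    intervalIntegral.intervalIntegral_pos_of_pos (hint a b) (fun t => Real.exp_pos _) hab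
  have hadd := intervalIntegral.integral_add_adjacent_intervals (hint 0 a) (hint a b)
  unfold erf
  apply mul_lt_mul_of_pos_left _ (by positivity)
  linarith

lemma integral_Iic_zero_exp_neg_sq :
    ∫ t in Set.Iic (0 : ℝ), Real.exp (-t ^ 2) = Real.sqrt Real.pi / 2 := by
  have h := integral_comp_neg_Iic (0 : ℝ) (fun t : ℝ => Real.exp (-t ^ 2))
  have h1 := integral_gaussian_Ioi 1
  simp only [neg_sq, neg_zero] at h
  simpa [h] using h1

lemma integral_Iio_exp_neg_sq (w : ℝ) :
    ∫ t in Set.Iio w, Real.exp (-t ^ 2) = Real.sqrt Real.pi * ((1 + erf w) / 2) := by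
  have h := intervalIntegral.integral_Iic_sub_Iic (a := 0) (b := w)
    integrable_exp_neg_sq.integrableOn integrable_exp_neg_sq.integrableOn
  rw [integral_Iic_zero_exp_neg_sq] at h
  have hpi : Real.sqrt Real.pi ≠ 0 := by positivity
  rw [← integral_Iic_eq_integral_Iio, sub_eq_iff_eq_add.mp h, erf]
  field_simp
  ring

/-- The distribution function of `N(0, 1/2)` in terms of the error function. -/
lemma gaussianReal_half_Iio (w : ℝ) :
    gaussianReal 0 (1 / 2) (Set.Iio w) = ENNReal.ofReal ((1 + erf w) / 2) := by
  have hpi : Real.sqrt Real.pi ≠ 0 := by positivity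
  have hpdf : gaussianPDFReal 0 (1 / 2) =
      fun t => (Real.sqrt Real.pi)⁻¹ * Real.exp (-t ^ 2) := by
    ext t
    simp [gaussianPDFReal, mul_comm]
  rw [gaussianReal_apply_eq_integral _ (by simp), hpdf, integral_const_mul,
    integral_Iio_exp_neg_sq, inv_mul_cancel_left₀ hpi]

/-- The distribution function of `N(m, σ²)`, obtained by writing this law as the image of
`N(0, 1/2)` under `x ↦ √2 σ x + m`. -/
lemma gaussianReal_Iio (m σ : ℝ) (hσ : 0 < σ) (z : ℝ) :
    gaussianReal m ⟨σ ^ 2, sq_nonneg σ⟩ (Set.Iio z) =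
      ENNReal.ofReal ((1 + erf ((z - m) / (Real.sqrt 2 * σ))) / 2) := by
  have hc : 0 < Real.sqrt 2 * σ := by positivity
  have hmap : gaussianReal m ⟨σ ^ 2, sq_nonneg σ⟩ =
      ((gaussianReal 0 (1 / 2)).map (Real.sqrt 2 * σ * ·)).map (· + m) := by
    rw [gaussianReal_map_const_mul, gaussianReal_map_add_const]
    congr 1
    · ring
    · apply NNReal.eq
      simp only [NNReal.coe_mul, NNReal.coe_mk, NNReal.coe_div, NNReal.coe_one, NNReal.coe_ofNat]
      rw [mul_pow, Real.sq_sqrt zero_le_two]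
      change σ ^ 2 = _
      ring
  rw [hmap, Measure.map_apply (by fun_prop) measurableSet_Iio,
    Measure.map_apply (by fun_prop) (measurableSet_Iio.preimage (by fun_prop)),
    ← gaussianReal_half_Iio]
  congr 1
  ext x
  simp only [Set.mem_preimage, Set.mem_Iio]
  rw [lt_div_iff₀ hc, lt_sub_iff_add_lt, mul_comm x]

theorem VaR_gaussianReal (m σ ε : ℝ) (hσ : 0 < σ) (hε : ε ∈ Set.Ioo (0 : ℝ) 1)
    (ι : ℝ) (hι : erf ι = 2 * ε - 1) :
    VaR (gaussianReal m ⟨σ ^ 2, sq_nonneg σ⟩) ε = m + Real.sqrt 2 * σ * ι := by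
  have hc : 0 < Real.sqrt 2 * σ := by positivity
  have hset : {z : ℝ | ENNReal.ofReal ε < gaussianReal m ⟨σ ^ 2, sq_nonneg σ⟩ (Set.Iio z)} =
      Set.Ioi (m + Real.sqrt 2 * σ * ι) := by
    ext z
    have hε' : ε = (1 + erf ι) / 2 := by linarith
    rw [Set.mem_ofPred_eq, gaussianReal_Iio m σ hσ,
      ENNReal.ofReal_lt_ofReal_iff_of_nonneg hε.1.le, hε', div_lt_div_iff_of_pos_right two_pos,
      add_lt_add_iff_left, erf_strictMono.lt_iff_lt, lt_div_iff₀ hc, Set.mem_Ioi,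
      lt_sub_iff_add_lt', mul_comm ι]
  rw [VaR, hset, csInf_Ioi]
end

section
/- Let m₁, m₂ ∈ ℝ and σ₁, σ₂ > 0. For every probability measure π on ℝ × ℝ whose first marginal is N(m₁, σ₁²) and whose second marginal is N(m₂, σ₂²), the second transport cost satisfies ∫ (x − y)² dπ(x,y) ≥ (m₁ − m₂)² + (σ₁ − σ₂)². -/
open MeasureTheory ProbabilityTheory

/-!
Write `u = x - m₁`, `v = y - m₂`, `d = m₁ - m₂`, so that `x - y = u - v + d`. The square
`(σ₂ u - σ₁ v)² ≥ 0` gives the weighted AM-GM bound `2 u v ≤ (σ₂ / σ₁) u² + (σ₁ / σ₂) v²`, hence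
`(x - y)² ≥ (1 - σ₂ / σ₁) u² + (1 - σ₁ / σ₂) v² + 2 d (u - v) + d²`.
The right-hand side is a sum of a function of `x` and a function of `y`, so its integral depends on
the marginals only; since `u`, `v` are centred with variances `σ₁²`, `σ₂²`, that integral is
`(σ₁² - σ₁ σ₂) + (σ₂² - σ₁ σ₂) + d² = (σ₁ - σ₂)² + d²`.
-/

/-- The first two centred moments of a real random variable with Gaussian law. -/
lemma centred_moments {Ω : Type*} [MeasurableSpace Ω] (P : Measure Ω) [IsProbabilityMeasure P]
    {X : Ω → ℝ} (hX : Measurable X) (m : ℝ) (v : NNReal) (h : P.map X = gaussianReal m v) :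
    Integrable (fun ω => X ω - m) P ∧ ∫ ω, (X ω - m) ∂P = 0 ∧
      Integrable (fun ω => (X ω - m) ^ 2) P ∧ ∫ ω, (X ω - m) ^ 2 ∂P = v := by
  have hL : MemLp X 2 P := by
    have h0 : MemLp id 2 (P.map X) := h ▸ memLp_id_gaussianReal 2
    exact h0.comp_of_map hX.aemeasurable
  have hI : Integrable X P := hL.integrable one_le_two
  have hmean : ∫ ω, X ω ∂P = m := by
    rw [← integral_id_gaussianReal (μ := m) (v := v), ← h,
      integral_map hX.aemeasurable (by fun_prop)]
  have hvar : ∫ ω, (X ω - m) ^ 2 ∂P = v := by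
    have h1 := variance_fun_id_gaussianReal (μ := m) (v := v)
    rw [variance_eq_integral (by fun_prop), integral_id_gaussianReal, ← h,
      integral_map hX.aemeasurable (by fun_prop)] at h1
    exact h1
  refine ⟨hI.sub (integrable_const m), ?_, (hL.sub (memLp_const m)).integrable_sq, hvar⟩
  rw [integral_sub hI (integrable_const m), hmean]
  simp

theorem wasserstein_lower_bound_gaussian
    (m₁ m₂ σ₁ σ₂ : ℝ) (hσ₁ : 0 < σ₁) (hσ₂ : 0 < σ₂)
    (π : Measure (ℝ × ℝ)) [IsProbabilityMeasure π]
    (h₁ : π.map Prod.fst = gaussianReal m₁ ⟨σ₁ ^ 2, sq_nonneg σ₁⟩)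
    (h₂ : π.map Prod.snd = gaussianReal m₂ ⟨σ₂ ^ 2, sq_nonneg σ₂⟩) :
    ENNReal.ofReal ((m₁ - m₂) ^ 2 + (σ₁ - σ₂) ^ 2) ≤
      ∫⁻ q, ENNReal.ofReal ((q.1 - q.2) ^ 2) ∂π := by
  obtain ⟨iu, eu, iu2, eu2⟩ := centred_moments π measurable_fst m₁ _ h₁
  obtain ⟨iv, ev, iv2, ev2⟩ := centred_moments π measurable_snd m₂ _ h₂
  change _ = σ₁ ^ 2 at eu2
  change _ = σ₂ ^ 2 at ev2
  set d := m₁ - m₂ with hd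
  have iF : Integrable (fun q : ℝ × ℝ =>
      (1 - σ₂ / σ₁) * (q.1 - m₁) ^ 2 + 2 * d * (q.1 - m₁)) π :=
    (iu2.const_mul (1 - σ₂ / σ₁)).add (iu.const_mul (2 * d))
  have iG : Integrable (fun q : ℝ × ℝ =>
      (1 - σ₁ / σ₂) * (q.2 - m₂) ^ 2 - 2 * d * (q.2 - m₂)) π :=
    (iv2.const_mul (1 - σ₁ / σ₂)).sub (iv.const_mul (2 * d))
  have iFG : Integrable (fun q : ℝ × ℝ =>
      ((1 - σ₂ / σ₁) * (q.1 - m₁) ^ 2 + 2 * d * (q.1 - m₁)) +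
        ((1 - σ₁ / σ₂) * (q.2 - m₂) ^ 2 - 2 * d * (q.2 - m₂))) π := iF.add iG
  have iH : Integrable (fun q : ℝ × ℝ =>
      ((1 - σ₂ / σ₁) * (q.1 - m₁) ^ 2 + 2 * d * (q.1 - m₁)) +
        ((1 - σ₁ / σ₂) * (q.2 - m₂) ^ 2 - 2 * d * (q.2 - m₂)) + d ^ 2) π :=
    iFG.add (integrable_const _)
  have hint : ∫ q : ℝ × ℝ, (((1 - σ₂ / σ₁) * (q.1 - m₁) ^ 2 + 2 * d * (q.1 - m₁)) +
      ((1 - σ₁ / σ₂) * (q.2 - m₂) ^ 2 - 2 * d * (q.2 - m₂)) + d ^ 2) ∂π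
      = d ^ 2 + (σ₁ - σ₂) ^ 2 := by
    rw [integral_add iFG (integrable_const _), integral_add iF iG,
      integral_add (iu2.const_mul _) (iu.const_mul _),
      integral_sub (iv2.const_mul _) (iv.const_mul _)]
    simp only [integral_const_mul, eu, ev, eu2, ev2, integral_const, probReal_univ, one_smul]
    field_simp
    ring
  rw [← hint]
  -- The minorant may be negative, so it is replaced by its positive part before its integral is
  -- converted to a Lebesgue integral.
  refine (ENNReal.ofReal_le_ofReal
    (integral_mono iH iH.pos_part fun q => le_max_left _ _)).trans ?_
  rw [ofReal_integral_eq_lintegral_ofReal iH.pos_part (ae_of_all _ fun q => le_max_right _ _)]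
  refine lintegral_mono fun q => ?_
  refine ENNReal.ofReal_le_ofReal (max_le ?_ (sq_nonneg _))
  have key : (q.1 - q.2) ^ 2 - (((1 - σ₂ / σ₁) * (q.1 - m₁) ^ 2 + 2 * d * (q.1 - m₁)) +
      ((1 - σ₁ / σ₂) * (q.2 - m₂) ^ 2 - 2 * d * (q.2 - m₂)) + d ^ 2)
      = (σ₂ * (q.1 - m₁) - σ₁ * (q.2 - m₂)) ^ 2 / (σ₁ * σ₂) := by
    rw [hd]
    field_simp
    ring
  have : 0 ≤ (σ₂ * (q.1 - m₁) - σ₁ * (q.2 - m₂)) ^ 2 / (σ₁ * σ₂) := by positivity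
  linarith
end

section
/- Let m₁, m₂ ∈ ℝ and σ₁, σ₂ > 0. There exists a probability measure π on ℝ × ℝ whose first marginal is N(m₁, σ₁²) and whose second marginal is N(m₂, σ₂²) such that ∫ (x − y)² dπ(x,y) = (m₁ − m₂)² + (σ₁ − σ₂)²; in particular, the pushforward of N(m₁, σ₁²) under the map x ↦ (x, m₂ + (σ₂/σ₁)(x − m₁)) is such a coupling. -/
/-!
The affine map `T x = m₂ + (σ₂ / σ₁) (x - m₁)` sends `N(m₁, σ₁²)` to `N(m₂, σ₂²)`, so the law of
`(X, T X)` for `X ∼ N(m₁, σ₁²)` is a coupling. The displacement `X - T X` is again an affine image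
of `X`, hence Gaussian (`gaussianReal_map_affine`), with mean `m₁ - m₂` and variance `(1 - σ₂ / σ₁)² σ₁² = (σ₁ - σ₂)²`; the
transport cost is its second moment, that is, mean squared plus variance
(`lintegral_sq_gaussianReal`).
-/

open MeasureTheory ProbabilityTheory

lemma gaussianReal_map_affine (m : ℝ) (v : NNReal) (a c : ℝ) :
    (gaussianReal m v).map (fun x => a + c * x) =
      gaussianReal (c * m + a) (NNReal.mk (c ^ 2) (sq_nonneg c) * v) := by
  have h : (fun x : ℝ => a + c * x) = (fun y => a + y) ∘ (fun x => c * x) := rfl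
  rw [h, ← Measure.map_map (by fun_prop) (by fun_prop), gaussianReal_map_const_mul,
    gaussianReal_map_const_add]

lemma lintegral_sq_gaussianReal (m : ℝ) (v : NNReal) :
    ∫⁻ x, ENNReal.ofReal (x ^ 2) ∂(gaussianReal m v) = ENNReal.ofReal (m ^ 2 + v) := by
  have hL : MemLp (fun x : ℝ => x) 2 (gaussianReal m v) := memLp_id_gaussianReal 2
  rw [← ofReal_integral_eq_lintegral_ofReal hL.integrable_sq (ae_of_all _ fun x => sq_nonneg x)]
  congr 1
  have h := variance_eq_sub hL
  rw [variance_fun_id_gaussianReal, integral_id_gaussianReal] at h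
  simp only [Pi.pow_apply] at h
  linarith

/-- The coupling with the variances as abstract elements of `ℝ≥0`: an anonymous constructor
`⟨σ ^ 2, _⟩` elaborates at the underlying subtype, which blocks rewriting and instance search. -/
lemma exists_affine_coupling_gaussianReal
    (m₁ m₂ σ₁ σ₂ : ℝ) (hσ₁ : 0 < σ₁) (v₁ v₂ : NNReal)
    (hv₁ : (v₁ : ℝ) = σ₁ ^ 2) (hv₂ : (v₂ : ℝ) = σ₂ ^ 2) :
    ∃ π : Measure (ℝ × ℝ), IsProbabilityMeasure π ∧
      π.map Prod.fst = gaussianReal m₁ v₁ ∧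
      π.map Prod.snd = gaussianReal m₂ v₂ ∧
      (∫⁻ q, ENNReal.ofReal ((q.1 - q.2) ^ 2) ∂π) =
        ENNReal.ofReal ((m₁ - m₂) ^ 2 + (σ₁ - σ₂) ^ 2) ∧
      π = (gaussianReal m₁ v₁).map
            (fun x => (x, m₂ + (σ₂ / σ₁) * (x - m₁))) := by
  have hT : Measurable (fun x : ℝ => (x, m₂ + (σ₂ / σ₁) * (x - m₁))) := by fun_prop
  refine ⟨_, Measure.isProbabilityMeasure_map hT.aemeasurable, ?_, ?_, ?_, rfl⟩
  · rw [Measure.map_map measurable_fst hT]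
    exact Measure.map_id
  · rw [Measure.map_map measurable_snd hT]
    have h : Prod.snd ∘ (fun x : ℝ => (x, m₂ + (σ₂ / σ₁) * (x - m₁))) =
        fun x => (m₂ - σ₂ / σ₁ * m₁) + (σ₂ / σ₁) * x := by
      funext x
      simp only [Function.comp_apply]
      ring
    rw [h, gaussianReal_map_affine]
    congr 1
    · ring
    · ext
      rw [NNReal.coe_mul, NNReal.coe_mk, hv₁, hv₂]
      field_simp
  · rw [lintegral_map (by fun_prop) hT]
    have h : ∀ x : ℝ, x - (m₂ + (σ₂ / σ₁) * (x - m₁)) =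
        (σ₂ / σ₁ * m₁ - m₂) + (1 - σ₂ / σ₁) * x := fun x => by ring
    simp only [h]
    rw [← lintegral_map (f := fun y : ℝ => ENNReal.ofReal (y ^ 2))
      (g := fun x => (σ₂ / σ₁ * m₁ - m₂) + (1 - σ₂ / σ₁) * x) (by fun_prop) (by fun_prop),
      gaussianReal_map_affine, lintegral_sq_gaussianReal]
    congr 1
    rw [NNReal.coe_mul, NNReal.coe_mk, hv₁]
    field_simp
    ring

theorem wasserstein_optimal_coupling_gaussian
    (m₁ m₂ σ₁ σ₂ : ℝ) (hσ₁ : 0 < σ₁) (hσ₂ : 0 < σ₂) :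
    ∃ π : Measure (ℝ × ℝ), IsProbabilityMeasure π ∧
      π.map Prod.fst = gaussianReal m₁ ⟨σ₁ ^ 2, sq_nonneg σ₁⟩ ∧
      π.map Prod.snd = gaussianReal m₂ ⟨σ₂ ^ 2, sq_nonneg σ₂⟩ ∧
      (∫⁻ q, ENNReal.ofReal ((q.1 - q.2) ^ 2) ∂π) =
        ENNReal.ofReal ((m₁ - m₂) ^ 2 + (σ₁ - σ₂) ^ 2) ∧
      π = (gaussianReal m₁ ⟨σ₁ ^ 2, sq_nonneg σ₁⟩).map
            (fun x => (x, m₂ + (σ₂ / σ₁) * (x - m₁))) := by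
  exact exists_affine_coupling_gaussianReal m₁ m₂ σ₁ σ₂ hσ₁ _ _ rfl rfl
end
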